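/- For all integers i, k, l, j with i < k < l < j (so that the interval [k,l] is strictly contained in the interval [i,j]), the closed segments seg(i,j) and seg(k,l) are disjoint. -/

import Mathlib

/-- The grounded segment associated to the integer interval `[i, j]`:
the closed line segment in `ℝ²` from `(i, 0)` to `(j, 2 ^ j)`. -/
def seg (i j : ℤ) : Set (ℝ × ℝ) :=
  segment ℝ ((i : ℝ), (0 : ℝ)) ((j : ℝ), (2 : ℝ) ^ j)

/-!
The line through the outer segment `seg i j` bounds an open half-plane containing both endpoints of
`seg k l`, hence, by convexity, all of it. For the foot `(k, 0)` this is `i < k`. For the tip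
`(l, 2 ^ l)`, with `a = l - i` and `n = j - l`, it says `a + n < 2 ^ n * a`, which follows from
Bernoulli's inequality once `1 < a`.
-/

theorem disjoint_segment_of_le_of_lt {𝕜 E β : Type*} [Semiring 𝕜] [PartialOrder 𝕜]
    [AddCommMonoid E] [Module 𝕜 E] [AddCommMonoid β] [PartialOrder β] [IsOrderedCancelAddMonoid β]
    [Module 𝕜 β] [PosSMulStrictMono 𝕜 β] (f : E →ₗ[𝕜] β) {c : β} {p q r s : E}
    (hp : f p ≤ c) (hq : f q ≤ c) (hr : c < f r) (hs : c < f s) :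
    Disjoint (segment 𝕜 p q) (segment 𝕜 r s) := by
  have hpq : segment 𝕜 p q ⊆ {x | f x ≤ c} :=
    (convex_halfSpace_le f.isLinear c).segment_subset hp hq
  have hrs : segment 𝕜 r s ⊆ {x | c < f x} :=
    (convex_halfSpace_gt f.isLinear c).segment_subset hr hs
  exact Set.disjoint_left.2 fun x hx hx' => (hpq hx).not_gt (hrs hx')

section OrderedRing

variable {𝕜 : Type*} [CommRing 𝕜] [LinearOrder 𝕜] [IsStrictOrderedRing 𝕜]

theorem disjoint_grounded_segment {a b c d u v : 𝕜} (hu : 0 < u) (hac : a < c)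
    (hslope : v * (b - a) < u * (d - a)) :
    Disjoint (segment 𝕜 (a, 0) (b, u)) (segment 𝕜 (c, 0) (d, v)) := by
  -- The line through `(a, 0)` and `(b, u)` is the level set `f = u * a`.
  let f : 𝕜 × 𝕜 →ₗ[𝕜] 𝕜 := u • LinearMap.fst 𝕜 𝕜 𝕜 - (b - a) • LinearMap.snd 𝕜 𝕜 𝕜
  have hf (x y : 𝕜) : f (x, y) = u * x - (b - a) * y := rfl
  refine disjoint_segment_of_le_of_lt f (c := u * a) ?_ ?_ ?_ ?_ <;> rw [hf]
  · linarith
  · linarith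
  · simpa using mul_lt_mul_of_pos_left hac hu
  · linarith

theorem add_natCast_lt_pow_mul {a b : 𝕜} {n : ℕ} (ha : 0 < a) (hab : 1 < a * (b - 1))
    (hn : n ≠ 0) : a + n < b ^ n * a := by
  have hb : 0 < b - 1 := pos_of_mul_pos_right (zero_lt_one.trans hab) ha.le
  have hn' : (0 : 𝕜) < n := by positivity
  calc a + n < a + n * (a * (b - 1)) := by gcongr; exact lt_mul_of_one_lt_right hn' hab
    _ = (1 + n * (b - 1)) * a := by ring
    _ ≤ b ^ n * a := by gcongr; exact one_add_mul_sub_le_pow (by linarith) n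

end OrderedRing

theorem two_zpow_mul_sub_lt {𝕜 : Type*} [Field 𝕜] [LinearOrder 𝕜] [IsStrictOrderedRing 𝕜]
    {x : 𝕜} {l j : ℤ} (hxl : x + 1 < l) (hlj : l < j) :
    (2 : 𝕜) ^ l * (j - x) < 2 ^ j * (l - x) := by
  obtain ⟨n, rfl⟩ := Int.le.dest hlj.le
  have hn : n ≠ 0 := by omega
  have hgrowth : (l - x) + n < 2 ^ n * (l - x) :=
    add_natCast_lt_pow_mul (by linarith) (by linarith) hn
  calc (2 : 𝕜) ^ l * (((l + n : ℤ) : 𝕜) - x) = 2 ^ l * ((l - x) + n) := by push_cast; ring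
    _ < 2 ^ l * (2 ^ n * (l - x)) := by gcongr
    _ = 2 ^ (l + n : ℤ) * (l - x) := by rw [zpow_add₀ two_ne_zero, zpow_natCast, mul_assoc]

theorem seg_nested_disjoint_general {i k l j : ℤ} (hik : i < k) (hil : i + 1 < l) (hlj : l < j) :
    seg i j ∩ seg k l = ∅ := by
  have hslope : (2 : ℝ) ^ l * (j - i) < 2 ^ j * (l - i) :=
    two_zpow_mul_sub_lt (by exact_mod_cast hil) hlj
  exact (disjoint_grounded_segment (by positivity) (Int.cast_lt.2 hik) hslope).inter_eq

theorem seg_nested_disjoint (i k l j : ℤ) (hik : i < k) (hkl : k < l) (hlj : l < j) :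
    seg i j ∩ seg k l = ∅ :=
  seg_nested_disjoint_general hik (by omega) hlj
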